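/- Let μ be a Borel probability measure on ℝ that is not a Dirac point mass, with supp(μ) ⊆ [α, +∞) for some α ∈ ℝ. Then, on the interval (−∞, α): (1) G_μ(t) = ∫_ℝ (t − s)⁻¹ dμ(s) < 0, so F_μ = 1/G_μ is real-valued and smooth there; (2) F_μ″(t) > 0 for all t < α, so F_μ′ is strictly increasing on (−∞, α); (3) F_μ′(t) > 1 for all t < α; and (4) lim_{t → −∞} F_μ′(t) = 1. -/

import Mathlib

/-!
Write `J k t = ∫ (s - t)⁻ᵏ dμ(s)` (`inverseMoment`), so that `G = -J 1` and `J 0` is the total mass.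
Differentiation under the integral sign gives `J k' = k * J (k + 1)` off the support, hence
`F' = J 2 / (J 1)²` and `F'' = 2 (J 1 * J 3 - (J 2)²) / (J 1)³`. To the left of the support the
kernel is positive and, as a function of `s`, injective, so the Cauchy–Schwarz inequality
`(J (k + 1))² < J k * J (k + 2)` is strict unless `μ` is concentrated at a point: `k = 1` gives
`F'' > 0`, and `k = 0` gives `F' > 1 / J 0`. By dominated convergence `(-t)ᵏ * J k t → J 0` as
`t → -∞`, so that `F' = ((-t)² * J 2) / ((-t) * J 1)² → 1 / J 0`.
-/

open MeasureTheory

/-- The topological support of a measure: the set of points all of whose neighborhoods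
have positive measure. -/
def Measure.msupport {α : Type*} [TopologicalSpace α] {m : MeasurableSpace α}
    (μ : Measure α) : Set α :=
  {x | ∀ U ∈ nhds x, 0 < μ U}

open Filter Topology Set
open scoped ContDiff

section Integral

variable {Ω : Type*} {_ : MeasurableSpace Ω} {μ : Measure Ω} {f w : Ω → ℝ}

lemma integral_pos_of_not_ae_eq_zero (hf : 0 ≤ᵐ[μ] f) (hfi : Integrable f μ)
    (hne : ¬ f =ᵐ[μ] 0) : 0 < ∫ x, f x ∂μ :=
  (integral_nonneg_of_ae hf).lt_of_ne' <| mt (integral_eq_zero_iff_of_nonneg_ae hf hfi).1 hne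

lemma integral_pos_of_ae_pos [NeZero μ] (hf : ∀ᵐ x ∂μ, 0 < f x) (hfi : Integrable f μ) :
    0 < ∫ x, f x ∂μ := by
  refine integral_pos_of_not_ae_eq_zero (hf.mono fun _ hx => hx.le) hfi fun h0 => ?_
  obtain ⟨x, hx, hx0⟩ := (hf.and h0).exists
  exact hx.ne' hx0

lemma neZero_of_forall_not_ae_eq (hf : ∀ c, ¬ ∀ᵐ x ∂μ, f x = c) : NeZero μ :=
  ⟨by rintro rfl; exact hf 0 (by simp)⟩

-- With `A = ∫ w` and `B = ∫ w f`, the integral of `w (A f - B)²` is `A` times the gap.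
lemma sq_integral_mul_lt_integral_mul_integral_mul_sq (hw : ∀ᵐ x ∂μ, 0 < w x)
    (hf : ∀ c, ¬ ∀ᵐ x ∂μ, f x = c) (hwi : Integrable w μ)
    (hwf : Integrable (fun x => w x * f x) μ) (hwf2 : Integrable (fun x => w x * f x ^ 2) μ) :
    (∫ x, w x * f x ∂μ) ^ 2 < (∫ x, w x ∂μ) * ∫ x, w x * f x ^ 2 ∂μ := by
  have := neZero_of_forall_not_ae_eq hf
  set A := ∫ x, w x ∂μ
  set B := ∫ x, w x * f x ∂μ
  set C := ∫ x, w x * f x ^ 2 ∂μ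
  have hA : 0 < A := integral_pos_of_ae_pos hw hwi
  have expand : (fun x => w x * (A * f x - B) ^ 2)
      = fun x => A ^ 2 * (w x * f x ^ 2) - 2 * A * B * (w x * f x) + B ^ 2 * w x := by
    funext x; ring
  have hsub : Integrable (fun x => A ^ 2 * (w x * f x ^ 2) - 2 * A * B * (w x * f x)) μ :=
    (hwf2.const_mul _).sub (hwf.const_mul _)
  have hsq_int : Integrable (fun x => w x * (A * f x - B) ^ 2) μ := by
    rw [expand]
    exact hsub.add (hwi.const_mul _)
  have hsq_pos : 0 < ∫ x, w x * (A * f x - B) ^ 2 ∂μ := by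
    refine integral_pos_of_not_ae_eq_zero
      (hw.mono fun x hx => mul_nonneg hx.le (sq_nonneg _)) hsq_int fun h0 => hf (B / A) ?_
    filter_upwards [hw, h0] with x hx hx0
    have : A * f x - B = 0 := by simpa [hx.ne'] using hx0
    rw [eq_div_iff hA.ne']
    linarith
  have hsq_eq : ∫ x, w x * (A * f x - B) ^ 2 ∂μ = A * (A * C - B ^ 2) := by
    rw [expand, integral_add hsub (hwi.const_mul _),
      integral_sub (hwf2.const_mul _) (hwf.const_mul _), integral_const_mul, integral_const_mul,
      integral_const_mul]
    ring
  rw [hsq_eq] at hsq_pos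
  exact sub_pos.1 (pos_of_mul_pos_right hsq_pos hA.le)

lemma eq_dirac_of_ae_eq {μ : Measure Ω} [IsProbabilityMeasure μ] {c : Ω}
    (h : ∀ᵐ x ∂μ, x = c) : μ = Measure.dirac c := by
  simpa using (ProbabilityTheory.hasLaw_dirac_of_ae_eq (X := id) h).map_eq

end Integral

lemma msupport_eq_support {X : Type*} [TopologicalSpace X] {_ : MeasurableSpace X}
    (μ : Measure X) : Measure.msupport μ = μ.support :=
  Set.ext fun x => (Measure.mem_support_iff_forall x).symm

lemma exists_pos_ae_le_dist_of_notMem_support {X : Type*} [PseudoMetricSpace X]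
    [HereditarilyLindelofSpace X] {_ : MeasurableSpace X} {μ : Measure X} {x : X}
    (hx : x ∉ μ.support) : ∃ ε > 0, ∀ᵐ y ∂μ, ε ≤ dist y x := by
  obtain ⟨ε, hε, hball⟩ := Metric.isOpen_iff.1 Measure.isOpen_compl_support x hx
  refine ⟨ε, hε, ?_⟩
  filter_upwards [Measure.support_mem_ae (μ := μ)] with y hy
  exact not_lt.1 fun hlt => hball hlt hy

lemma hasDerivAt_inv_sub_pow {𝕜 : Type*} [NontriviallyNormedField 𝕜] {s t : 𝕜} (hst : s ≠ t)
    (k : ℕ) :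
    HasDerivAt (fun t => (s - t)⁻¹ ^ k) (k * (s - t)⁻¹ ^ (k + 1)) t := by
  have hne : s - t ≠ 0 := sub_ne_zero.2 hst
  refine ((((hasDerivAt_id t).const_sub s).inv hne).pow k).congr_deriv ?_
  cases k with
  | zero => simp
  | succ k =>
    simp only [id, Nat.add_sub_cancel, Pi.inv_apply, inv_pow]
    field_simp
    ring

lemma norm_inv_sub_pow_le {𝕜 : Type*} [NormedDivisionRing 𝕜] {s t : 𝕜} {ε : ℝ} (hε : 0 < ε)
    (h : ε ≤ dist s t) (k : ℕ) :
    ‖(s - t)⁻¹ ^ k‖ ≤ ε⁻¹ ^ k := by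
  rw [norm_pow, norm_inv, ← dist_eq_norm]
  gcongr

lemma ae_inv_sub_pow_pos {μ : Measure ℝ} {t : ℝ} (ht : μ.support ⊆ Ioi t) (k : ℕ) :
    ∀ᵐ s ∂μ, 0 < (s - t)⁻¹ ^ k := by
  filter_upwards [Measure.support_mem_ae (μ := μ)] with s hs
  exact pow_pos (inv_pos.2 (sub_pos.2 (ht hs))) k

lemma tendsto_neg_mul_inv_sub_atBot (s : ℝ) :
    Tendsto (fun t => -t * (s - t)⁻¹) atBot (𝓝 1) := by
  have hinv : Tendsto (fun t => (s - t)⁻¹) atBot (𝓝 0) :=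
    tendsto_inv_atTop_zero.comp (tendsto_atTop_add_const_left _ s tendsto_neg_atBot_atTop)
  have hlim : Tendsto (fun t => 1 - s * (s - t)⁻¹) atBot (𝓝 1) := by
    simpa using (hinv.const_mul s).const_sub 1
  refine hlim.congr' ?_
  filter_upwards [eventually_lt_atBot s] with t ht
  have : s - t ≠ 0 := (sub_pos.2 ht).ne'
  field_simp
  ring

/-- The moment `∫ (s - t)⁻ᵏ dμ(s)` of the Cauchy kernel at `t`. The sign is opposite to that of the
kernel `(t - s)⁻¹` of `G_μ`, so that all moments are positive to the left of the support. -/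
noncomputable def inverseMoment (μ : Measure ℝ) (k : ℕ) (t : ℝ) : ℝ := ∫ s, (s - t)⁻¹ ^ k ∂μ

/-- The Cauchy transform `G_μ` on the real line; meaningful off the support of `μ`. -/
noncomputable def cauchyTransform (μ : Measure ℝ) (t : ℝ) : ℝ := ∫ s, (t - s)⁻¹ ∂μ

/-- The reciprocal Cauchy transform `F_μ = 1 / G_μ` on the real line; meaningful off the support of
`μ`, where `G_μ ≠ 0`. -/
noncomputable def reciprocalCauchyTransform (μ : Measure ℝ) (t : ℝ) : ℝ := (cauchyTransform μ t)⁻¹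

section InverseMoment

lemma inverseMoment_zero (μ : Measure ℝ) (t : ℝ) : inverseMoment μ 0 t = μ.real univ := by
  simp [inverseMoment]

lemma cauchyTransform_eq_neg_inverseMoment (μ : Measure ℝ) :
    cauchyTransform μ = fun t => -inverseMoment μ 1 t := by
  funext t
  simp only [cauchyTransform, inverseMoment, pow_one, ← integral_neg, ← inv_neg, neg_sub]

variable {μ : Measure ℝ} [IsFiniteMeasure μ] {t : ℝ}

lemma integrable_inv_sub_pow (ht : t ∉ μ.support) (k : ℕ) :
    Integrable (fun s => (s - t)⁻¹ ^ k) μ := by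
  obtain ⟨ε, hε, hdist⟩ := exists_pos_ae_le_dist_of_notMem_support ht
  exact .of_bound (by fun_prop) (ε⁻¹ ^ k) (hdist.mono fun s hs => norm_inv_sub_pow_le hε hs k)

lemma hasDerivAt_inverseMoment (ht : t ∉ μ.support) (k : ℕ) :
    HasDerivAt (inverseMoment μ k) (k * inverseMoment μ (k + 1) t) t := by
  obtain ⟨ε, hε, hdist⟩ := exists_pos_ae_le_dist_of_notMem_support ht
  have hdist_ball : ∀ᵐ s ∂μ, ∀ x ∈ Metric.ball t (ε / 2), ε / 2 ≤ dist s x := by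
    filter_upwards [hdist] with s hs x hx
    linarith [dist_triangle s x t, Metric.mem_ball.1 hx]
  have hderiv := (hasDerivAt_integral_of_dominated_loc_of_deriv_le
    (F := fun x s => (s - x)⁻¹ ^ k) (F' := fun x s => k * (s - x)⁻¹ ^ (k + 1))
    (bound := fun _ => k * (ε / 2)⁻¹ ^ (k + 1))
    (Metric.ball_mem_nhds t (half_pos hε)) (.of_forall fun x => by fun_prop)
    (integrable_inv_sub_pow ht k) (by fun_prop)
    (hdist_ball.mono fun s hs x hx => by
      rw [norm_mul, Real.norm_natCast]
      gcongr
      exact norm_inv_sub_pow_le (half_pos hε) (hs x hx) (k + 1))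
    (integrable_const _)
    (hdist_ball.mono fun s hs x hx =>
      hasDerivAt_inv_sub_pow (dist_pos.1 ((half_pos hε).trans_le (hs x hx))) k)).2
  rwa [integral_const_mul] at hderiv

lemma contDiffOn_inverseMoment (μ : Measure ℝ) [IsFiniteMeasure μ] (k : ℕ) :
    ContDiffOn ℝ ∞ (inverseMoment μ k) μ.supportᶜ := by
  refine contDiffOn_infty.2 fun n => ?_
  induction n generalizing k with
  | zero =>
    exact contDiffOn_zero.2 fun t ht =>
      (hasDerivAt_inverseMoment ht k).continuousAt.continuousWithinAt
  | succ n ih =>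
    push_cast
    rw [contDiffOn_succ_iff_deriv_of_isOpen Measure.isOpen_compl_support]
    exact ⟨fun t ht => (hasDerivAt_inverseMoment ht k).differentiableAt.differentiableWithinAt,
      by simp, (contDiffOn_const.mul (ih (k + 1))).congr fun t ht =>
        (hasDerivAt_inverseMoment ht k).deriv⟩

lemma inverseMoment_pos [NeZero μ] (ht : μ.support ⊆ Ioi t) (k : ℕ) :
    0 < inverseMoment μ k t :=
  integral_pos_of_ae_pos (ae_inv_sub_pow_pos ht k)
    (integrable_inv_sub_pow (notMem_subset ht self_notMem_Ioi) k)

lemma sq_inverseMoment_succ_lt (hμ : ∀ c, ¬ ∀ᵐ s ∂μ, s = c) (ht : μ.support ⊆ Ioi t) (k : ℕ) :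
    inverseMoment μ (k + 1) t ^ 2 < inverseMoment μ k t * inverseMoment μ (k + 2) t := by
  have hint := integrable_inv_sub_pow (μ := μ) (notMem_subset ht self_notMem_Ioi)
  have hnonconst : ∀ c, ¬ ∀ᵐ s ∂μ, (s - t)⁻¹ = c := fun c h =>
    hμ (c⁻¹ + t) <| h.mono fun s hs => by rw [← hs, inv_inv, sub_add_cancel]
  simpa only [inverseMoment, pow_succ, pow_zero, one_mul, mul_assoc] using
    sq_integral_mul_lt_integral_mul_integral_mul_sq (ae_inv_sub_pow_pos ht k) hnonconst (hint k)
      (by simpa only [pow_succ] using hint (k + 1))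
      (by simpa only [← pow_add] using hint (k + 2))

lemma tendsto_neg_pow_mul_inverseMoment_atBot (hμ : BddBelow μ.support) (k : ℕ) :
    Tendsto (fun t => (-t) ^ k * inverseMoment μ k t) atBot (𝓝 (μ.real univ)) := by
  obtain ⟨α, hα⟩ := hμ
  have hbound : ∀ᶠ t in atBot, ∀ᵐ s ∂μ, ‖(-t * (s - t)⁻¹) ^ k‖ ≤ 2 ^ k := by
    filter_upwards [eventually_lt_atBot 0, eventually_lt_atBot α, eventually_le_atBot (2 * α)]
      with t ht0 htα ht2α
    filter_upwards [Measure.support_mem_ae (μ := μ)] with s hs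
    have hαs : α ≤ s := hα hs
    have hst : 0 < s - t := by linarith
    have hratio : -t * (s - t)⁻¹ ≤ 2 := by
      rw [← div_eq_mul_inv, div_le_iff₀ hst]
      linarith
    rw [norm_pow, Real.norm_of_nonneg (mul_nonneg (by linarith) (inv_pos.2 hst).le)]
    exact pow_le_pow_left₀ (mul_nonneg (by linarith) (inv_pos.2 hst).le) hratio k
  have hlim : Tendsto (fun t => ∫ s, (-t * (s - t)⁻¹) ^ k ∂μ) atBot (𝓝 (∫ _, (1 : ℝ) ∂μ)) :=
    tendsto_integral_filter_of_dominated_convergence (fun _ => 2 ^ k)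
      (.of_forall fun t => by fun_prop) hbound (integrable_const _)
      (.of_forall fun s => by simpa using (tendsto_neg_mul_inv_sub_atBot s).pow k)
  simpa only [mul_pow, integral_const_mul, integral_const, smul_eq_mul, mul_one,
    inverseMoment] using hlim

end InverseMoment

section CauchyTransform

variable {μ : Measure ℝ} [IsFiniteMeasure μ] {t : ℝ}

lemma contDiffOn_cauchyTransform (μ : Measure ℝ) [IsFiniteMeasure μ] :
    ContDiffOn ℝ ∞ (cauchyTransform μ) μ.supportᶜ := by
  rw [cauchyTransform_eq_neg_inverseMoment]
  exact (contDiffOn_inverseMoment μ 1).neg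

lemma cauchyTransform_neg [NeZero μ] (ht : μ.support ⊆ Ioi t) : cauchyTransform μ t < 0 := by
  rw [cauchyTransform_eq_neg_inverseMoment]
  exact neg_neg_of_pos (inverseMoment_pos ht 1)

lemma hasDerivAt_reciprocalCauchyTransform (ht : t ∉ μ.support) (hG : cauchyTransform μ t ≠ 0) :
    HasDerivAt (reciprocalCauchyTransform μ)
      (inverseMoment μ 2 t / inverseMoment μ 1 t ^ 2) t := by
  have hderiv : HasDerivAt (cauchyTransform μ) (-inverseMoment μ 2 t) t := by
    rw [cauchyTransform_eq_neg_inverseMoment]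
    simpa using (hasDerivAt_inverseMoment ht 1).fun_neg
  refine (hderiv.inv hG).congr_deriv ?_
  simp [cauchyTransform_eq_neg_inverseMoment]

lemma hasDerivAt_deriv_reciprocalCauchyTransform (ht : t ∉ μ.support)
    (hG : cauchyTransform μ t ≠ 0) :
    HasDerivAt (deriv (reciprocalCauchyTransform μ))
      (2 * (inverseMoment μ 1 t * inverseMoment μ 3 t - inverseMoment μ 2 t ^ 2)
        / inverseMoment μ 1 t ^ 3) t := by
  have hJ : inverseMoment μ 1 t ≠ 0 := by
    simpa [cauchyTransform_eq_neg_inverseMoment] using hG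
  have hquot := (hasDerivAt_inverseMoment ht 2).div ((hasDerivAt_inverseMoment ht 1).pow 2)
    (pow_ne_zero 2 hJ)
  have hcompl : μ.supportᶜ ∈ 𝓝 t := Measure.isOpen_compl_support.mem_nhds ht
  have hGcont : ContinuousAt (cauchyTransform μ) t :=
    (contDiffOn_cauchyTransform μ).continuousOn.continuousAt hcompl
  have hderiv : deriv (reciprocalCauchyTransform μ)
      =ᶠ[𝓝 t] inverseMoment μ 2 / inverseMoment μ 1 ^ 2 := by
    filter_upwards [hcompl, hGcont.eventually_ne hG] with x hx hGx
    exact (hasDerivAt_reciprocalCauchyTransform hx hGx).deriv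
  refine (hquot.congr_of_eventuallyEq hderiv).congr_deriv ?_
  simp only [Pi.pow_apply]
  field_simp
  push_cast
  ring

lemma deriv_deriv_reciprocalCauchyTransform_pos (hμ : ∀ c, ¬ ∀ᵐ s ∂μ, s = c)
    (ht : μ.support ⊆ Ioi t) : 0 < deriv (deriv (reciprocalCauchyTransform μ)) t := by
  have := neZero_of_forall_not_ae_eq hμ
  rw [(hasDerivAt_deriv_reciprocalCauchyTransform (notMem_subset ht self_notMem_Ioi)
    (cauchyTransform_neg ht).ne).deriv]
  have hJ := inverseMoment_pos ht 1
  have hCS := sub_pos.2 (sq_inverseMoment_succ_lt hμ ht 1)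
  positivity

lemma inv_measureReal_univ_lt_deriv_reciprocalCauchyTransform (hμ : ∀ c, ¬ ∀ᵐ s ∂μ, s = c)
    (ht : μ.support ⊆ Ioi t) : (μ.real univ)⁻¹ < deriv (reciprocalCauchyTransform μ) t := by
  have := neZero_of_forall_not_ae_eq hμ
  rw [(hasDerivAt_reciprocalCauchyTransform (notMem_subset ht self_notMem_Ioi)
    (cauchyTransform_neg ht).ne).deriv, lt_div_iff₀ (pow_pos (inverseMoment_pos ht 1) 2),
    inv_mul_lt_iff₀ measureReal_univ_pos, ← inverseMoment_zero μ t]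
  exact sq_inverseMoment_succ_lt hμ ht 0

lemma tendsto_deriv_reciprocalCauchyTransform_atBot [NeZero μ] (hμ : BddBelow μ.support) :
    Tendsto (deriv (reciprocalCauchyTransform μ)) atBot (𝓝 (μ.real univ)⁻¹) := by
  have hmass : μ.real univ ≠ 0 := measureReal_univ_pos.ne'
  have hquot := (tendsto_neg_pow_mul_inverseMoment_atBot hμ 2).div
    ((tendsto_neg_pow_mul_inverseMoment_atBot hμ 1).pow 2) (pow_ne_zero 2 hmass)
  rw [pow_two, div_mul_cancel_left₀ hmass] at hquot
  refine hquot.congr' ?_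
  obtain ⟨α, hα⟩ := hμ
  filter_upwards [eventually_lt_atBot α, eventually_lt_atBot 0] with t htα ht0
  have ht : μ.support ⊆ Ioi t := fun s hs => htα.trans_le (hα hs)
  rw [(hasDerivAt_reciprocalCauchyTransform (notMem_subset ht self_notMem_Ioi)
    (cauchyTransform_neg ht).ne).deriv, Pi.div_apply, pow_one, mul_pow,
    mul_div_mul_left _ _ (pow_ne_zero 2 (neg_ne_zero.2 ht0.ne))]

end CauchyTransform

theorem reciprocal_cauchyTransform_convexity_left_of_support_general
    (μ : Measure ℝ) [IsFiniteMeasure μ] (α : ℝ) (hsupp : μ.support ⊆ Ici α)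
    (hμ : ∀ c, ¬ ∀ᵐ s ∂μ, s = c) :
    (∀ t < α, cauchyTransform μ t < 0) ∧
    ContDiffOn ℝ ∞ (reciprocalCauchyTransform μ) (Iio α) ∧
    (∀ t < α, 0 < deriv (deriv (reciprocalCauchyTransform μ)) t) ∧
    StrictMonoOn (deriv (reciprocalCauchyTransform μ)) (Iio α) ∧
    (∀ t < α, (μ.real univ)⁻¹ < deriv (reciprocalCauchyTransform μ) t) ∧
    Tendsto (deriv (reciprocalCauchyTransform μ)) atBot (𝓝 (μ.real univ)⁻¹) := by
  have := neZero_of_forall_not_ae_eq hμ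
  have hleft : ∀ t < α, μ.support ⊆ Ioi t := fun t ht => hsupp.trans (Ici_subset_Ioi.2 ht)
  have hneg : ∀ t < α, cauchyTransform μ t < 0 := fun t ht => cauchyTransform_neg (hleft t ht)
  have hsmooth : ContDiffOn ℝ ∞ (reciprocalCauchyTransform μ) (Iio α) :=
    ((contDiffOn_cauchyTransform μ).mono fun t ht => notMem_subset (hleft t ht) self_notMem_Ioi).inv
      fun t ht => (hneg t ht).ne
  have hconv : ∀ t < α, 0 < deriv (deriv (reciprocalCauchyTransform μ)) t := fun t ht =>
    deriv_deriv_reciprocalCauchyTransform_pos hμ (hleft t ht)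
  have hmono : StrictMonoOn (deriv (reciprocalCauchyTransform μ)) (Iio α) :=
    strictMonoOn_of_deriv_pos (convex_Iio α)
      (hsmooth.continuousOn_deriv_of_isOpen isOpen_Iio (by simp))
      (by rwa [interior_Iio])
  exact ⟨hneg, hsmooth, hconv, hmono,
    fun t ht => inv_measureReal_univ_lt_deriv_reciprocalCauchyTransform hμ (hleft t ht),
    tendsto_deriv_reciprocalCauchyTransform_atBot ⟨α, fun _ hs => hsupp hs⟩⟩

/-- If `μ` is a Borel probability measure on `ℝ`, not a point mass, supported in `[α, ∞)`,
then on `(-∞, α)`: the Cauchy transform `G_μ` is negative (so `F_μ = 1/G_μ` is real-valued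
and smooth there), `F_μ'' > 0` (so `F_μ'` is strictly increasing), `F_μ' > 1`, and
`F_μ'(t) → 1` as `t → -∞`. -/
theorem reciprocal_cauchyTransform_convexity_left_of_support
    (μ : Measure ℝ) [IsProbabilityMeasure μ] (α : ℝ)
    (hsupp : Measure.msupport μ ⊆ Set.Ici α)
    (hnd : ∀ c : ℝ, μ ≠ Measure.dirac c) :
    (∀ t < α, (∫ s, (t - s)⁻¹ ∂μ) < 0) ∧
    ContDiffOn ℝ (⊤ : ℕ∞) (fun t : ℝ => (∫ s, (t - s)⁻¹ ∂μ)⁻¹) (Set.Iio α) ∧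
    (∀ t < α, 0 < deriv (deriv (fun t : ℝ => (∫ s, (t - s)⁻¹ ∂μ)⁻¹)) t) ∧
    StrictMonoOn (deriv (fun t : ℝ => (∫ s, (t - s)⁻¹ ∂μ)⁻¹)) (Set.Iio α) ∧
    (∀ t < α, 1 < deriv (fun t : ℝ => (∫ s, (t - s)⁻¹ ∂μ)⁻¹) t) ∧
    Filter.Tendsto (deriv (fun t : ℝ => (∫ s, (t - s)⁻¹ ∂μ)⁻¹)) Filter.atBot (nhds 1) := by
  have h := reciprocal_cauchyTransform_convexity_left_of_support_general μ α
    (msupport_eq_support μ ▸ hsupp) fun c hc => hnd c (eq_dirac_of_ae_eq hc)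
  rwa [probReal_univ, inv_one] at h
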